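/- Let k ≥ 2 be an integer, α = (1+√(1+4/k))/2 and β = kα+1. Fix i ∈ {1,…,k−1}. Then for all n ≥ 1, f^i_n = ⌊g^i_{n−1}·α⌋ and g^i_n = ⌊g^i_{n−1}·β⌋. In particular each pair (f^i_n, g^i_n) with n ≥ 1 is of the form (⌊mα⌋, ⌊mβ⌋) for some m ∈ ℕ (namely m = g^i_{n−1}), i.e., it is a P-position. -/

import Mathlib

/-- α = (1 + √(1 + 4/k)) / 2 -/
noncomputable def alphaK (k : ℕ) : ℝ := (1 + Real.sqrt (1 + 4 / (k : ℝ))) / 2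

/-- β = k·α + 1 -/
noncomputable def betaK (k : ℕ) : ℝ := (k : ℝ) * alphaK k + 1

/-- a_n = ⌊n·α⌋ -/
noncomputable def aSeq (k n : ℕ) : ℤ := ⌊(n : ℝ) * alphaK k⌋

/-- b_n = ⌊n·β⌋ -/
noncomputable def bSeq (k n : ℕ) : ℤ := ⌊(n : ℝ) * betaK k⌋

/-- the pair (f^i_n, g^i_n): (f^i_0,g^i_0) = (0,i+1),
    (f^i_n, g^i_n) = (f^i_{n−1} + g^i_{n−1}, k·f^i_{n−1} + (k+1)·g^i_{n−1} + i). -/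
def fg (k i : ℕ) : ℕ → ℕ × ℕ
  | 0 => (0, i + 1)
  | n + 1 => ((fg k i n).1 + (fg k i n).2,
      k * (fg k i n).1 + (k + 1) * (fg k i n).2 + i)

/-!
Eliminating `f` from the recursion leaves `g (n + 2) = (k + 2) * g (n + 1) - g n`, whose
characteristic roots are `β` and `β⁻¹`. Hence `g n * β - g (n + 1)` decays like `β⁻¹ ^ n` from
its initial value `1 - (i + 1) / β`, which lies in `(0, 1)` because `β > k + 1`. Both floors are
read off from this gap: it is the error of `g (n + 1)` against `g n * β`, and `k` times the error
of `f (n + 1)` against `g n * α` exceeds it by exactly `i`.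
-/

section Recurrence

variable {R : Type*} [CommRing R]

theorem sub_mul_eq_pow_mul_of_linear_recurrence {u : ℕ → R} {x y : R}
    (hu : ∀ n, u (n + 2) = (x + y) * u (n + 1) - x * y * u n) (n : ℕ) :
    u (n + 1) - x * u n = y ^ n * (u 1 - x * u 0) := by
  induction n with
  | zero => simp
  | succ n ih => linear_combination hu n + y * ih

end Recurrence

section Constants

variable {k : ℕ}

theorem one_lt_alphaK (hk : 0 < k) : 1 < alphaK k := by
  have hk' : (0 : ℝ) < 4 / k := by positivity
  have hsqrt : 1 < √(1 + 4 / (k : ℝ)) := Real.lt_sqrt_of_sq_lt (by linarith)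
  unfold alphaK
  linarith

theorem mul_alphaK_mul_alphaK_sub_one (hk : 0 < k) : k * (alphaK k * (alphaK k - 1)) = 1 := by
  have hsq : √(1 + 4 / (k : ℝ)) ^ 2 = 1 + 4 / k := Real.sq_sqrt (by positivity)
  have hk4 : (k : ℝ) * (4 / k) = 4 := by field_simp
  unfold alphaK
  linear_combination (k : ℝ) / 4 * hsq + hk4 / 4

theorem add_one_lt_betaK (hk : 0 < k) : (k : ℝ) + 1 < betaK k := by
  have hkα : (k : ℝ) < k * alphaK k :=
    lt_mul_of_one_lt_right (by exact_mod_cast hk) (one_lt_alphaK hk)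
  unfold betaK
  linarith

theorem betaK_pos (hk : 0 < k) : 0 < betaK k :=
  (by positivity : (0 : ℝ) < k + 1).trans (add_one_lt_betaK hk)

theorem betaK_add_inv (hk : 0 < k) : betaK k + (betaK k)⁻¹ = k + 2 := by
  have hmul : betaK k * (k + 2 - betaK k) = 1 := by
    unfold betaK
    linear_combination -(k : ℝ) * mul_alphaK_mul_alphaK_sub_one hk
  linear_combination inv_eq_of_mul_eq_one_right hmul

end Constants

section Gap

variable {k i : ℕ}

theorem fg_snd_add_two (n : ℕ) :
    ((fg k i (n + 2)).2 : ℝ) = (k + 2) * (fg k i (n + 1)).2 - (fg k i n).2 := by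
  simp only [fg]
  push_cast
  ring

theorem fg_snd_mul_betaK_sub (hk : 0 < k) (n : ℕ) :
    (fg k i n).2 * betaK k - (fg k i (n + 1)).2 =
      (betaK k)⁻¹ ^ n * (1 - (i + 1) * (betaK k)⁻¹) := by
  have hβ : betaK k ≠ 0 := (betaK_pos hk).ne'
  have hdecay := sub_mul_eq_pow_mul_of_linear_recurrence
    (u := fun n ↦ ((fg k i n).2 : ℝ)) (x := betaK k) (y := (betaK k)⁻¹)
    (fun n ↦ by rw [betaK_add_inv hk, mul_inv_cancel₀ hβ, one_mul, fg_snd_add_two]) n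
  have hinit : ((fg k i 1).2 : ℝ) - betaK k * (fg k i 0).2 = (i + 1) * (betaK k)⁻¹ - 1 := by
    simp only [fg]
    push_cast
    linear_combination -((i : ℝ) + 1) * betaK_add_inv hk
  rw [hinit] at hdecay
  linear_combination -hdecay

theorem fg_snd_mul_betaK_sub_mem_Ioo (hk : 0 < k) (hik : i ≤ k) (n : ℕ) :
    (fg k i n).2 * betaK k - (fg k i (n + 1)).2 ∈ Set.Ioo (0 : ℝ) 1 := by
  have hik' : (i : ℝ) ≤ k := by exact_mod_cast hik
  have hβ := add_one_lt_betaK hk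
  have hβpos := betaK_pos hk
  have hratio : (i + 1) * (betaK k)⁻¹ < 1 := by
    rw [← div_eq_mul_inv, div_lt_one hβpos]
    linarith
  have hratio_pos : 0 < (i + 1) * (betaK k)⁻¹ := by positivity
  have hpow : (betaK k)⁻¹ ^ n ≤ 1 :=
    pow_le_one₀ (by positivity) (inv_le_one_of_one_le₀ (by linarith [k.cast_nonneg (α := ℝ)]))
  rw [fg_snd_mul_betaK_sub hk]
  exact ⟨mul_pos (by positivity) (by linarith),
    mul_lt_one_of_nonneg_of_lt_one_right hpow (by linarith) (by linarith)⟩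

theorem mul_fg_snd_mul_alphaK_sub (n : ℕ) :
    k * ((fg k i n).2 * alphaK k - (fg k i (n + 1)).1) =
      (fg k i n).2 * betaK k - (fg k i (n + 1)).2 + i := by
  simp only [fg, betaK]
  push_cast
  ring

end Gap

theorem fg_is_Pposition_general {k i : ℕ} (hik : i < k) (n : ℕ) :
    ((fg k i (n + 1)).1 : ℤ) = aSeq k (fg k i n).2 ∧
    ((fg k i (n + 1)).2 : ℤ) = bSeq k (fg k i n).2 := by
  have hk : 0 < k := Nat.zero_lt_of_lt hik
  have hk' : (0 : ℝ) < k := by exact_mod_cast hk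
  have hik' : (i : ℝ) + 1 ≤ k := by exact_mod_cast hik
  obtain ⟨hgap_pos, hgap_lt⟩ := fg_snd_mul_betaK_sub_mem_Ioo hk hik.le n
  have herr := mul_fg_snd_mul_alphaK_sub (k := k) (i := i) n
  have herr_pos : 0 < (fg k i n).2 * alphaK k - (fg k i (n + 1)).1 :=
    pos_of_mul_pos_right (by rw [herr]; positivity) hk'.le
  have herr_lt : (fg k i n).2 * alphaK k - (fg k i (n + 1)).1 < 1 :=
    lt_of_mul_lt_mul_left (by linarith) hk'.le
  constructor <;> refine (Int.floor_eq_iff.mpr ?_).symm <;> push_cast <;> constructor <;> linarith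

/-- For n ≥ 1, f^i_n = ⌊g^i_{n−1}·α⌋ and g^i_n = ⌊g^i_{n−1}·β⌋;
    in particular (f^i_n, g^i_n) is a P-position. -/
theorem fg_is_Pposition (k : ℕ) (hk : 2 ≤ k) (i : ℕ) (hi1 : 1 ≤ i)
    (hik : i ≤ k - 1) (n : ℕ) (hn : 1 ≤ n) :
    ((fg k i n).1 : ℤ) = aSeq k (fg k i (n - 1)).2 ∧
    ((fg k i n).2 : ℤ) = bSeq k (fg k i (n - 1)).2 := by
  obtain ⟨m, rfl⟩ := Nat.exists_eq_add_of_le' hn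
  exact fg_is_Pposition_general (by omega) m
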